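/- Let d = 2 and let M(N) be the expected minimum bipartite matching length in the Poissonized model on [0,1]² with intensity N. Then there is a constant C > 0 such that M(N) ≤ C √N log N for all N ≥ 2; consequently, for 2N independent uniform points X₁,…,X_N, Y₁,…,Y_N in [0,1]², one has E L_MBM(X₁,…,X_N; Y₁,…,Y_N) ≤ C' √N log N for some constant C' and all N ≥ 2. -/

import Mathlib

open MeasureTheory ProbabilityTheory Filter

noncomputable section

/-- The unit cube `[0,1]^d` in Euclidean space `ℝ^d`. -/
def unitCube (d : ℕ) : Set (EuclideanSpace ℝ (Fin d)) :=
  {x | ∀ i, x i ∈ Set.Icc (0 : ℝ) 1}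

/-- The uniform probability measure on the unit cube `[0,1]^d`
(the cube has Lebesgue measure one, so the restriction of Lebesgue measure
to the cube is the uniform probability measure on it). -/
def unifCube (d : ℕ) : Measure (EuclideanSpace ℝ (Fin d)) :=
  volume.restrict (unitCube d)

/-- `LMBMon X Y A B` is the minimum total Euclidean length of a partial bipartite
matching pairing `min A.card B.card` of the points `X j, j ∈ A` with as many of the
points `Y j, j ∈ B`, each pair consisting of one `X`-point and one `Y`-point. -/
def LMBMon {d N₁ N₂ : ℕ} (X : Fin N₁ → EuclideanSpace ℝ (Fin d))
    (Y : Fin N₂ → EuclideanSpace ℝ (Fin d)) (A : Finset (Fin N₁)) (B : Finset (Fin N₂)) : ℝ :=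
  sInf { s | ∃ (σ : Fin (min A.card B.card) ↪ Fin N₁) (τ : Fin (min A.card B.card) ↪ Fin N₂),
    (∀ i, σ i ∈ A) ∧ (∀ i, τ i ∈ B) ∧ s = ∑ i, dist (X (σ i)) (Y (τ i)) }

/-- `LMBM X Y` : the minimum total Euclidean length of a bipartite matching between the
points of `X` and the points of `Y`; if the two families have different cardinalities
`N₁ ≠ N₂`, it is the minimum length of a partial matching pairing `min N₁ N₂` points of
each family, leaving `|N₁ - N₂|` points unmatched. -/
def LMBM {d N₁ N₂ : ℕ} (X : Fin N₁ → EuclideanSpace ℝ (Fin d))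
    (Y : Fin N₂ → EuclideanSpace ℝ (Fin d)) : ℝ :=
  LMBMon X Y Finset.univ Finset.univ

/-- `MP d lam`: the expected length of a minimum bipartite matching in the Poissonized
model on `[0,1]^d` with intensity `lam`: the numbers `n₁, n₂` of points of the two
families are independent Poisson(lam) variables and the points are i.i.d. uniform
on the cube. -/
def MP (d : ℕ) (lam : ℝ) : ℝ :=
  ∑' n₁ : ℕ, ∑' n₂ : ℕ,
    (Real.exp (-lam) * lam ^ n₁ / n₁.factorial) *
      ((Real.exp (-lam) * lam ^ n₂ / n₂.factorial) *
        ∫ p : (Fin n₁ → EuclideanSpace ℝ (Fin d)) × (Fin n₂ → EuclideanSpace ℝ (Fin d)),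
          LMBM p.1 p.2 ∂ ((Measure.pi fun _ => unifCube d).prod (Measure.pi fun _ => unifCube d)))

end

/-!
Dyadic decimation: match as many points as possible inside the cells of a fine dyadic grid, then
pass to coarser and coarser grids, extending the matching to a maximal one inside the cells each
time. A point left over in its cell is part of a surplus of one family there, so the number of
edges added at scale `l` is at most the total discrepancy between the occupation numbers of the
cells of level `l + 1`, and each of these edges has length of order `2⁻ˡ`. For samples of sizes
`m` and `n`, the second moment of the discrepancy in a cell of probability `p` is at most
`(m + n + (m - n)²) p`, so by Cauchy–Schwarz the expected total discrepancy over the `2^(d(l + 1))`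
cells is at most `√(2^(d(l + 1)) (m + n + (m - n)²))`. In dimension two the factors `2⁻ˡ` and
`2^(l + 1)` compensate: all scales contribute equally, and `O(log N)` scales suffice. For
independent Poisson sizes of mean `N`, the expectation of `m + n + (m - n)²` is `4 N`.
-/

noncomputable section

open scoped Finset NNReal Nat

section Matching

variable {α β ι : Type*}

/-- A bipartite matching between `α` and `β`, given as its finite set of edges, all of which join
points related by `r`. -/
structure IsMatching (r : α → β → Prop) (M : Finset (α × β)) : Prop where
  rel : ∀ p ∈ M, r p.1 p.2
  injOn_fst : Set.InjOn Prod.fst (M : Set (α × β))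
  injOn_snd : Set.InjOn Prod.snd (M : Set (α × β))

lemma isMatching_empty (r : α → β → Prop) : IsMatching r ∅ :=
  ⟨by simp, by simp, by simp⟩

lemma IsMatching.mono {r r' : α → β → Prop} {M : Finset (α × β)} (hM : IsMatching r M)
    (h : ∀ i j, r i j → r' i j) : IsMatching r' M :=
  ⟨fun p hp => h _ _ (hM.rel p hp), hM.injOn_fst, hM.injOn_snd⟩

lemma IsMatching.exists_maximal_superset [Finite α] [Finite β] {r : α → β → Prop}
    {M : Finset (α × β)} (hM : IsMatching r M) : ∃ M', M ⊆ M' ∧ Maximal (IsMatching r) M' :=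
  Finite.exists_le_maximal hM

lemma IsMatching.insert [DecidableEq α] [DecidableEq β] {r : α → β → Prop} {M : Finset (α × β)}
    (hM : IsMatching r M) {i : α} {j : β} (hr : r i j) (hi : i ∉ M.image Prod.fst)
    (hj : j ∉ M.image Prod.snd) :
    IsMatching r (insert (i, j) M) := by
  have hij : (i, j) ∉ (M : Set (α × β)) := fun h => hi (Finset.mem_image_of_mem _ h)
  refine ⟨?_, ?_, ?_⟩
  · simpa [hr] using fun a b => hM.rel (a, b)
  · rw [Finset.coe_insert, Set.injOn_insert hij, ← Finset.coe_image]
    exact ⟨hM.injOn_fst, hi⟩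
  · rw [Finset.coe_insert, Set.injOn_insert hij, ← Finset.coe_image]
    exact ⟨hM.injOn_snd, hj⟩

lemma IsMatching.fst_mem_or_snd_mem_of_maximal [DecidableEq α] [DecidableEq β]
    {r : α → β → Prop} {M : Finset (α × β)} (hM : Maximal (IsMatching r) M) {i : α} {j : β}
    (hr : r i j) :
    i ∈ M.image Prod.fst ∨ j ∈ M.image Prod.snd := by
  by_contra! h
  have hmem : (i, j) ∈ M :=
    hM.le_of_ge (hM.prop.insert hr h.1 h.2) (Finset.subset_insert _ _) (Finset.mem_insert_self _ _)
  exact h.1 (Finset.mem_image_of_mem _ hmem)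

lemma IsMatching.card_sdiff_le_card_unmatched [Fintype α] [DecidableEq α] [DecidableEq β]
    {r : α → β → Prop} {M M' : Finset (α × β)} (hM' : IsMatching r M') (hsub : M ⊆ M') :
    #(M' \ M) ≤ #(M.image Prod.fst)ᶜ := by
  refine Finset.card_le_card_of_injOn Prod.fst (fun p hp => ?_)
    (hM'.injOn_fst.mono (Finset.coe_subset.mpr Finset.sdiff_subset))
  obtain ⟨hpM', hpM⟩ := Finset.mem_sdiff.mp hp
  simp only [Finset.mem_coe, Finset.mem_compl, Finset.mem_image, not_exists, not_and]
  intro p' hp' heq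
  exact hpM (hM'.injOn_fst (hsub hp') hpM' heq ▸ hp')

variable [Fintype α] [Fintype β]

lemma IsMatching.card_eq_min_of_maximal {r : α → β → Prop} (hr : ∀ i j, r i j)
    {M : Finset (α × β)} (hM : Maximal (IsMatching r) M) :
    #M = min (Fintype.card α) (Fintype.card β) := by
  classical
  have hfst := Finset.card_image_of_injOn hM.prop.injOn_fst
  have hsnd := Finset.card_image_of_injOn hM.prop.injOn_snd
  have huniv : M.image Prod.fst = Finset.univ ∨ M.image Prod.snd = Finset.univ := by
    simp only [Finset.eq_univ_iff_forall]
    by_contra! h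
    obtain ⟨⟨i, hi⟩, j, hj⟩ := h
    exact (fst_mem_or_snd_mem_of_maximal hM (hr i j)).elim hi hj
  have hle_fst := Finset.card_le_univ (M.image Prod.fst)
  have hle_snd := Finset.card_le_univ (M.image Prod.snd)
  rcases huniv with h | h <;> have hcard := congrArg Finset.card h <;>
    rw [Finset.card_univ] at hcard <;> omega

variable [DecidableEq ι]

/-- The signed difference between the numbers of points carrying the label `q` under two
labellings. -/
def countDiff (a : α → ι) (b : β → ι) (q : ι) : ℝ :=
  #{i | a i = q} - #{j | b j = q}

/-- The total discrepancy between two labellings over the labels in `S`, bounding the number of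
points that cannot be matched to a point with the same label. -/
def discrepancy (S : Finset ι) (a : α → ι) (b : β → ι) : ℝ :=
  ∑ q ∈ S, |countDiff a b q|

lemma IsMatching.card_unmatched_label_le_of_maximal [DecidableEq α]
    {a : α → ι} {b : β → ι} {M : Finset (α × β)}
    (hM : Maximal (IsMatching fun i j => a i = b j) M) (q : ι) :
    (#{i | a i = q ∧ i ∉ M.image Prod.fst} : ℝ) ≤ |countDiff a b q| := by
  classical
  obtain hU | ⟨i₀, hi₀⟩ := Finset.eq_empty_or_nonempty
    ({i | a i = q ∧ i ∉ M.image Prod.fst} : Finset α)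
  · rw [hU, Finset.card_empty, Nat.cast_zero]
    exact abs_nonneg _
  rw [Finset.mem_filter_univ] at hi₀
  -- An unmatched `i₀` with label `q` forces every `j` with label `q` to be matched.
  let Mq := M.filter fun p => a p.1 = q
  have hb : ({j | b j = q} : Finset β) ⊆ Mq.image Prod.snd := by
    intro j hj
    rw [Finset.mem_filter_univ] at hj
    rcases fst_mem_or_snd_mem_of_maximal hM (hi₀.1.trans hj.symm) with h | h
    · exact absurd h hi₀.2
    · obtain ⟨p, hp, rfl⟩ := Finset.mem_image.mp h
      exact Finset.mem_image_of_mem _ (Finset.mem_filter.mpr ⟨hp, (hM.prop.rel p hp).trans hj⟩)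
  have ha : Mq.image Prod.fst ⊆ ({i | a i = q ∧ i ∈ M.image Prod.fst} : Finset α) := by
    intro i hi
    obtain ⟨p, hp, rfl⟩ := Finset.mem_image.mp hi
    rw [Finset.mem_filter] at hp
    exact Finset.mem_filter.mpr ⟨Finset.mem_univ _, hp.2, Finset.mem_image_of_mem _ hp.1⟩
  have hMq : #(Mq.image Prod.fst) = #Mq :=
    Finset.card_image_of_injOn (hM.prop.injOn_fst.mono (Finset.filter_subset _ _))
  have hsplit := Finset.card_filter_add_card_filter_not (s := {i | a i = q})
    (fun i => i ∈ M.image Prod.fst)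
  simp only [Finset.filter_filter] at hsplit
  have hcount : #{j | b j = q} + #{i | a i = q ∧ i ∉ M.image Prod.fst} ≤ #{i | a i = q} := by
    have := (Finset.card_le_card hb).trans Finset.card_image_le
    have := Finset.card_le_card ha
    omega
  refine le_trans ?_ (le_abs_self _)
  rw [countDiff, le_sub_iff_add_le']
  exact_mod_cast hcount

lemma IsMatching.card_unmatched_le_discrepancy_of_maximal [DecidableEq α]
    {a : α → ι} {b : β → ι} {S : Finset ι} (ha : ∀ i, a i ∈ S) {M : Finset (α × β)}
    (hM : Maximal (IsMatching fun i j => a i = b j) M) :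
    (#(M.image Prod.fst)ᶜ : ℝ) ≤ discrepancy S a b := by
  rw [Finset.card_eq_sum_card_fiberwise (f := a) (t := S) fun i _ => ha i, Nat.cast_sum]
  refine Finset.sum_le_sum fun q _ => ?_
  convert! IsMatching.card_unmatched_label_le_of_maximal hM q using 3
  ext i
  simp [and_comm]

lemma IsMatching.exists_maximal_coarsening {a a' : α → ι} {b b' : β → ι}
    {S : Finset ι} {w : α → β → ℝ} {δ : ℝ} (ha : ∀ i, a i ∈ S) (hδ : 0 ≤ δ)
    (hcoarse : ∀ i j, a i = b j → a' i = b' j) (hw : ∀ i j, a' i = b' j → w i j ≤ δ)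
    {M : Finset (α × β)} (hM : Maximal (IsMatching fun i j => a i = b j) M) :
    ∃ M', Maximal (IsMatching fun i j => a' i = b' j) M' ∧
      ∑ p ∈ M', w p.1 p.2 ≤ ∑ p ∈ M, w p.1 p.2 + δ * discrepancy S a b := by
  obtain ⟨M', hsub, hM'⟩ := (hM.prop.mono hcoarse).exists_maximal_superset
  classical
  refine ⟨M', hM', ?_⟩
  have hcard : (#(M' \ M) : ℝ) ≤ discrepancy S a b :=
    (Nat.cast_le.mpr (hM'.prop.card_sdiff_le_card_unmatched hsub)).trans
      (card_unmatched_le_discrepancy_of_maximal ha hM)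
  have hnew : ∑ p ∈ M' \ M, w p.1 p.2 ≤ δ * discrepancy S a b := calc
    ∑ p ∈ M' \ M, w p.1 p.2 ≤ #(M' \ M) • δ :=
      Finset.sum_le_card_nsmul _ _ _ fun p hp =>
        hw _ _ (hM'.prop.rel p (Finset.mem_sdiff.mp hp).1)
    _ = δ * #(M' \ M) := by rw [nsmul_eq_mul, mul_comm]
    _ ≤ δ * discrepancy S a b := by gcongr
  rw [← Finset.sum_sdiff hsub]
  linarith

variable {a : ℕ → α → ι} {b : ℕ → β → ι} {S : ℕ → Finset ι} {w : α → β → ℝ} {δ : ℕ → ℝ}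

lemma IsMatching.exists_maximal_zero_of_maximal (ha : ∀ k i, a k i ∈ S k) (hδ : ∀ k, 0 ≤ δ k)
    (hnest : ∀ k i j, a (k + 1) i = b (k + 1) j → a k i = b k j)
    (hw : ∀ k i j, a k i = b k j → w i j ≤ δ k) (K : ℕ) {M : Finset (α × β)}
    (hM : Maximal (IsMatching fun i j => a K i = b K j) M) :
    ∃ M', Maximal (IsMatching fun i j => a 0 i = b 0 j) M' ∧
      ∑ p ∈ M', w p.1 p.2 ≤ ∑ p ∈ M, w p.1 p.2 +
        ∑ l ∈ Finset.range K, δ l * discrepancy (S (l + 1)) (a (l + 1)) (b (l + 1)) := by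
  induction K generalizing M with
  | zero => exact ⟨M, hM, by simp⟩
  | succ K ih =>
    obtain ⟨M₁, hM₁, hcost₁⟩ := exists_maximal_coarsening (ha (K + 1)) (hδ K) (hnest K) (hw K) hM
    obtain ⟨M₀, hM₀, hcost₀⟩ := ih hM₁
    refine ⟨M₀, hM₀, ?_⟩
    rw [Finset.sum_range_succ]
    linarith

theorem IsMatching.exists_card_eq_min_sum_le (ha : ∀ k i, a k i ∈ S k) (hδ : ∀ k, 0 ≤ δ k)
    (hnest : ∀ k i j, a (k + 1) i = b (k + 1) j → a k i = b k j)
    (hw : ∀ k i j, a k i = b k j → w i j ≤ δ k) (hzero : ∀ i j, a 0 i = b 0 j) (K : ℕ) :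
    ∃ M : Finset (α × β), IsMatching (fun _ _ => True) M ∧
      #M = min (Fintype.card α) (Fintype.card β) ∧
      ∑ p ∈ M, w p.1 p.2 ≤ δ K * Fintype.card α +
        ∑ l ∈ Finset.range K, δ l * discrepancy (S (l + 1)) (a (l + 1)) (b (l + 1)) := by
  obtain ⟨M, -, hM⟩ := (isMatching_empty fun i j => a K i = b K j).exists_maximal_superset
  obtain ⟨M₀, hM₀, hcost⟩ := exists_maximal_zero_of_maximal ha hδ hnest hw K hM
  refine ⟨M₀, hM₀.prop.mono fun _ _ _ => trivial, card_eq_min_of_maximal hzero hM₀,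
    hcost.trans ?_⟩
  gcongr
  calc
    ∑ p ∈ M, w p.1 p.2 ≤ #M • δ K :=
      Finset.sum_le_card_nsmul _ _ _ fun p hp => hw K _ _ (hM.prop.rel p hp)
    _ = δ K * #M := by rw [nsmul_eq_mul, mul_comm]
    _ ≤ δ K * Fintype.card α := by
      classical
      rw [← Finset.card_image_of_injOn hM.prop.injOn_fst]
      gcongr
      exacts [hδ K, Finset.card_le_univ _]

end Matching

section EuclideanMatching

variable {d N₁ N₂ : ℕ} (X : Fin N₁ → EuclideanSpace ℝ (Fin d))
  (Y : Fin N₂ → EuclideanSpace ℝ (Fin d))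

lemma LMBM_nonneg : 0 ≤ LMBM X Y := by
  refine Real.sInf_nonneg ?_
  rintro s ⟨σ, τ, -, -, rfl⟩
  positivity

variable {X Y}

lemma IsMatching.LMBM_le_sum_dist {r : Fin N₁ → Fin N₂ → Prop} {M : Finset (Fin N₁ × Fin N₂)}
    (hM : IsMatching r M) (hcard : #M = min N₁ N₂) :
    LMBM X Y ≤ ∑ p ∈ M, dist (X p.1) (Y p.2) := by
  have hcard' : #M = min #(Finset.univ : Finset (Fin N₁)) #(Finset.univ : Finset (Fin N₂)) := by
    simpa using hcard
  let e := (M.equivFinOfCardEq hcard').symm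
  let σ : Fin _ ↪ Fin N₁ := ⟨fun i => (e i).1.1, hM.injOn_fst.injective.comp e.injective⟩
  let τ : Fin _ ↪ Fin N₂ := ⟨fun i => (e i).1.2, hM.injOn_snd.injective.comp e.injective⟩
  refine csInf_le ⟨0, ?_⟩ ⟨σ, τ, by simp, by simp, ?_⟩
  · rintro s ⟨σ, τ, -, -, rfl⟩
    positivity
  · rw [← Finset.sum_coe_sort]
    exact (e.sum_comp fun p => dist (X p.1.1) (Y p.1.2)).symm

end EuclideanMatching

section DyadicCells

variable {d : ℕ}

/-- The index of the cell of side `2 * 2⁻ᵏ` containing `x`. The side length, twice the usual one,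
keeps the faces `x i = 1` of the closed unit cube inside the `2 ^ k` cells per direction with
indices in `dyadicCells d k`. -/
def dyadicCell (k : ℕ) (x : EuclideanSpace ℝ (Fin d)) : Fin d → ℕ :=
  fun i => ⌊(2 : ℝ) ^ k * (x i / 2)⌋₊

/-- The indices of the level-`k` dyadic cells meeting the unit cube. -/
def dyadicCells (d k : ℕ) : Finset (Fin d → ℕ) :=
  Fintype.piFinset fun _ => Finset.range (2 ^ k)

lemma card_dyadicCells (d k : ℕ) : #(dyadicCells d k) = (2 ^ k) ^ d := by
  simp [dyadicCells]

@[fun_prop]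
lemma measurable_dyadicCell (k : ℕ) : Measurable (dyadicCell (d := d) k) := by
  unfold dyadicCell
  fun_prop

lemma dyadicCell_mem_dyadicCells (k : ℕ) {x : EuclideanSpace ℝ (Fin d)} (hx : x ∈ unitCube d) :
    dyadicCell k x ∈ dyadicCells d k := by
  simp only [dyadicCells, Fintype.mem_piFinset, Finset.mem_range]
  intro i
  obtain ⟨h0, h1⟩ := hx i
  rw [dyadicCell, Nat.floor_lt (by positivity)]
  push_cast
  exact mul_lt_of_lt_one_right (by positivity) (by linarith)

lemma dyadicCell_zero {x : EuclideanSpace ℝ (Fin d)} (hx : x ∈ unitCube d) :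
    dyadicCell 0 x = 0 := by
  simpa [dyadicCells, funext_iff] using dyadicCell_mem_dyadicCells 0 hx

lemma dyadicCell_eq_succ_div_two (k : ℕ) (x : EuclideanSpace ℝ (Fin d)) :
    dyadicCell k x = fun i => dyadicCell (k + 1) x i / 2 := by
  ext i
  simp only [dyadicCell]
  rw [← Nat.floor_div_ofNat]
  congr 1
  ring

lemma dyadicCell_eq_of_succ_eq {k : ℕ} {x y : EuclideanSpace ℝ (Fin d)}
    (h : dyadicCell (k + 1) x = dyadicCell (k + 1) y) : dyadicCell k x = dyadicCell k y := by
  rw [dyadicCell_eq_succ_div_two, h, ← dyadicCell_eq_succ_div_two]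

lemma abs_sub_le_one_of_natFloor_eq {u v : ℝ} (hu : 0 ≤ u) (hv : 0 ≤ v) (h : ⌊u⌋₊ = ⌊v⌋₊) :
    |u - v| ≤ 1 :=
  (Int.abs_sub_lt_one_of_floor_eq_floor (by
    rw [← Int.natCast_floor_eq_floor hu, ← Int.natCast_floor_eq_floor hv, h])).le

lemma abs_apply_sub_le_of_dyadicCell_eq {k : ℕ} {x y : EuclideanSpace ℝ (Fin d)}
    (hx : x ∈ unitCube d) (hy : y ∈ unitCube d) (h : dyadicCell k x = dyadicCell k y) (i : Fin d) :
    |x i - y i| ≤ 2 * (1 / 2) ^ k := by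
  have hx0 := (hx i).1
  have hy0 := (hy i).1
  have hfloor := abs_sub_le_one_of_natFloor_eq (by positivity) (by positivity) (congrFun h i)
  rw [← mul_sub, ← sub_div, abs_mul, abs_div, abs_two, abs_of_pos (by positivity)] at hfloor
  rw [one_div, inv_pow, ← div_eq_mul_inv, le_div_iff₀ (by positivity)]
  linarith

lemma dist_le_of_dyadicCell_eq {k : ℕ} {x y : EuclideanSpace ℝ (Fin d)}
    (hx : x ∈ unitCube d) (hy : y ∈ unitCube d) (h : dyadicCell k x = dyadicCell k y) :
    dist x y ≤ √d * (2 * (1 / 2) ^ k) := by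
  rw [EuclideanSpace.dist_eq, Real.sqrt_le_left (by positivity), mul_pow,
    Real.sq_sqrt d.cast_nonneg]
  calc
    ∑ i, dist (x i) (y i) ^ 2 ≤ ∑ _i : Fin d, (2 * (1 / 2 : ℝ) ^ k) ^ 2 := by
      gcongr with i
      exact abs_apply_sub_le_of_dyadicCell_eq hx hy h i
    _ = d * (2 * (1 / 2) ^ k) ^ 2 := by simp

/-- The total discrepancy between the occupation numbers of the level-`k` dyadic cells by two
point families. -/
def dyadicDiscrepancy (k : ℕ) {N₁ N₂ : ℕ} (X : Fin N₁ → EuclideanSpace ℝ (Fin d))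
    (Y : Fin N₂ → EuclideanSpace ℝ (Fin d)) : ℝ :=
  discrepancy (dyadicCells d k) (dyadicCell k ∘ X) (dyadicCell k ∘ Y)

theorem LMBM_le_sum_dyadicDiscrepancy {N₁ N₂ : ℕ} {X : Fin N₁ → EuclideanSpace ℝ (Fin d)}
    {Y : Fin N₂ → EuclideanSpace ℝ (Fin d)} (hX : ∀ i, X i ∈ unitCube d)
    (hY : ∀ j, Y j ∈ unitCube d) (K : ℕ) :
    LMBM X Y ≤ √d * (2 * (1 / 2) ^ K) * N₁ +
      ∑ l ∈ Finset.range K, √d * (2 * (1 / 2) ^ l) * dyadicDiscrepancy (l + 1) X Y := by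
  obtain ⟨M, hM, hcard, hcost⟩ := IsMatching.exists_card_eq_min_sum_le
    (a := fun k => dyadicCell k ∘ X) (b := fun k => dyadicCell k ∘ Y)
    (S := dyadicCells d) (w := fun i j => dist (X i) (Y j)) (δ := fun k => √d * (2 * (1 / 2) ^ k))
    (fun k i => dyadicCell_mem_dyadicCells k (hX i)) (fun k => by positivity)
    (fun k i j => dyadicCell_eq_of_succ_eq)
    (fun k i j => dist_le_of_dyadicCell_eq (hX i) (hY j))
    (fun i j => (dyadicCell_zero (hX i)).trans (dyadicCell_zero (hY j)).symm) K
  rw [Fintype.card_fin, Fintype.card_fin] at hcard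
  rw [Fintype.card_fin] at hcost
  exact (hM.LMBM_le_sum_dist hcard).trans hcost

end DyadicCells

section SecondMoments

variable {Ω Ω' : Type*} [MeasurableSpace Ω] [MeasurableSpace Ω']

lemma integral_sq_sub_prod {μ : Measure Ω} [IsProbabilityMeasure μ] {ν : Measure Ω'}
    [IsProbabilityMeasure ν] {f : Ω → ℝ} {g : Ω' → ℝ} (hf : MemLp f 2 μ) (hg : MemLp g 2 ν) :
    ∫ p, (f p.1 - g p.2) ^ 2 ∂μ.prod ν = Var[f; μ] + Var[g; ν] + (μ[f] - ν[g]) ^ 2 := by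
  have hdiff : MemLp (fun p : Ω × Ω' => f p.1 - g p.2) 2 (μ.prod ν) :=
    (hf.comp_fst ν).sub (hg.comp_snd μ)
  have hmean : ∫ p, (f p.1 - g p.2) ∂μ.prod ν = μ[f] - ν[g] := by
    rw [integral_sub ((hf.integrable one_le_two).comp_fst ν)
      ((hg.integrable one_le_two).comp_snd μ), integral_fun_fst, integral_fun_snd]
    simp
  have hvar : Var[fun p => f p.1 - g p.2; μ.prod ν] = Var[f; μ] + Var[g; ν] := by
    simpa [sub_eq_add_neg, variance_neg] using variance_add_prod hf hg.neg
  have hsq := variance_eq_sub hdiff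
  simp only [Pi.pow_apply] at hsq
  rw [hvar, hmean] at hsq
  linarith

lemma integral_le_sqrt_integral_sq {μ : Measure Ω} [IsProbabilityMeasure μ] {f : Ω → ℝ}
    (hf : MemLp f 2 μ) : μ[f] ≤ √(∫ ω, f ω ^ 2 ∂μ) := by
  refine Real.le_sqrt_of_sq_le ?_
  have hvar := variance_eq_sub hf
  simp only [Pi.pow_apply] at hvar
  linarith [variance_nonneg f μ]

end SecondMoments

section TwoSample

variable {Ω ι : Type*}

lemma countDiff_comp_eq_sum_indicator [DecidableEq ι] {c : Ω → ι} (q : ι) {m n : ℕ}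
    (p : (Fin m → Ω) × (Fin n → Ω)) :
    countDiff (c ∘ p.1) (c ∘ p.2) q = ∑ i, (c ⁻¹' {q}).indicator (1 : Ω → ℝ) (p.1 i) -
      ∑ j, (c ⁻¹' {q}).indicator (1 : Ω → ℝ) (p.2 j) := by
  classical
  simp [countDiff, Set.indicator_apply, Finset.sum_boole]

variable [MeasurableSpace Ω]

/-- The joint law of two independent samples of sizes `m` and `n` from `μ`. -/
abbrev twoSample (μ : Measure Ω) (m n : ℕ) : Measure ((Fin m → Ω) × (Fin n → Ω)) :=
  (Measure.pi fun _ => μ).prod (Measure.pi fun _ => μ)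

variable {μ : Measure Ω} [IsProbabilityMeasure μ]

lemma ae_twoSample_mem {s : Set Ω} (hs : ∀ᵐ x ∂μ, x ∈ s) (m n : ℕ) :
    ∀ᵐ p ∂twoSample μ m n, (∀ i, p.1 i ∈ s) ∧ ∀ j, p.2 j ∈ s := by
  have hpi (k : ℕ) : ∀ᵐ x : Fin k → Ω ∂Measure.pi (fun _ => μ), ∀ i, x i ∈ s :=
    ae_all_iff.mpr fun i => Measure.tendsto_eval_ae_ae.eventually hs
  exact (Measure.quasiMeasurePreserving_fst.ae (hpi m)).and
    (Measure.quasiMeasurePreserving_snd.ae (hpi n))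

lemma memLp_sum_eval {κ : Type*} [Fintype κ] {f : Ω → ℝ} (hf : MemLp f 2 μ) :
    MemLp (fun x : κ → Ω => ∑ i, f (x i)) 2 (Measure.pi fun _ => μ) :=
  memLp_finsetSum _ fun i _ =>
    hf.comp_measurePreserving (measurePreserving_eval (fun _ => μ) i)

lemma integral_sq_sum_sub_sum {f : Ω → ℝ} (hf : MemLp f 2 μ) (m n : ℕ) :
    ∫ p, (∑ i, f (p.1 i) - ∑ j, f (p.2 j)) ^ 2 ∂twoSample μ m n =
      (m + n) * Var[f; μ] + (m - n) ^ 2 * μ[f] ^ 2 := by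
  have hvar (k : ℕ) : Var[fun x : Fin k → Ω => ∑ i, f (x i); Measure.pi fun _ => μ] =
      k * Var[f; μ] := by
    have := variance_sum_pi (μ := fun _ : Fin k => μ) (X := fun _ => f) fun _ => hf
    simpa [Finset.sum_fn] using this
  have hmean (k : ℕ) : ∫ x : Fin k → Ω, ∑ i, f (x i) ∂Measure.pi (fun _ => μ) = k * μ[f] := by
    rw [integral_finsetSum _ fun i _ => integrable_comp_eval (hf.integrable one_le_two)]
    simp [integral_comp_eval (μ := fun _ : Fin k => μ) hf.aestronglyMeasurable]
  rw [integral_sq_sub_prod (memLp_sum_eval hf) (memLp_sum_eval hf), hvar, hvar, hmean, hmean]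
  ring

/-- The quantity `m + n + (m - n)²`, which controls the difference between the occupation numbers
of two independent samples of sizes `m` and `n` from the same law. -/
def sampleFluctuation (m n : ℕ) : ℝ :=
  m + n + (m - n) ^ 2

lemma le_sampleFluctuation (m n : ℕ) : (m : ℝ) ≤ sampleFluctuation m n := by
  rw [sampleFluctuation, add_assoc]
  exact le_add_of_nonneg_right (by positivity)

lemma sampleFluctuation_nonneg (m n : ℕ) : 0 ≤ sampleFluctuation m n :=
  m.cast_nonneg.trans (le_sampleFluctuation m n)

lemma memLp_two_indicator_one {s : Set Ω} (hs : MeasurableSet s) :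
    MemLp (s.indicator (1 : Ω → ℝ)) 2 μ :=
  memLp_indicator_const 2 hs 1 (Or.inr (measure_ne_top μ _))

variable {c : Ω → ι}

lemma sum_measureReal_fiber_le_one (hc : ∀ q, MeasurableSet (c ⁻¹' {q})) (S : Finset ι) :
    ∑ q ∈ S, μ.real (c ⁻¹' {q}) ≤ 1 := by
  rw [← measureReal_biUnion_finset ?_ fun q _ => hc q]
  · exact measureReal_le_one
  · exact fun q _ q' _ hqq' => Disjoint.preimage _ (by simpa using hqq')

variable [DecidableEq ι]

lemma memLp_countDiff {q : ι} (hq : MeasurableSet (c ⁻¹' {q})) (m n : ℕ) :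
    MemLp (fun p => countDiff (c ∘ p.1) (c ∘ p.2) q) 2 (twoSample μ m n) := by
  simp only [countDiff_comp_eq_sum_indicator]
  exact ((memLp_sum_eval (memLp_two_indicator_one hq)).comp_fst _).sub
    ((memLp_sum_eval (memLp_two_indicator_one hq)).comp_snd _)

lemma integral_countDiff_sq_le {q : ι} (hq : MeasurableSet (c ⁻¹' {q})) (m n : ℕ) :
    ∫ p, countDiff (c ∘ p.1) (c ∘ p.2) q ^ 2 ∂twoSample μ m n ≤
      sampleFluctuation m n * μ.real (c ⁻¹' {q}) := by
  have hind := memLp_two_indicator_one (μ := μ) hq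
  have hmean : μ[(c ⁻¹' {q}).indicator (1 : Ω → ℝ)] = μ.real (c ⁻¹' {q}) :=
    integral_indicator_one hq
  have hvar : Var[(c ⁻¹' {q}).indicator (1 : Ω → ℝ); μ] ≤ μ.real (c ⁻¹' {q}) := by
    refine (variance_le_expectation_sq hind.aestronglyMeasurable).trans_eq ?_
    rw [← hmean]
    congr 1
    ext x
    by_cases hx : x ∈ c ⁻¹' {q} <;> simp [hx]
  have hsq : μ.real (c ⁻¹' {q}) ^ 2 ≤ μ.real (c ⁻¹' {q}) :=
    pow_le_of_le_one measureReal_nonneg measureReal_le_one two_ne_zero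
  simp only [countDiff_comp_eq_sum_indicator]
  rw [integral_sq_sum_sub_sum hind, hmean, sampleFluctuation, add_mul _ (_ ^ 2)]
  gcongr

lemma memLp_discrepancy (hc : ∀ q, MeasurableSet (c ⁻¹' {q})) (S : Finset ι) (m n : ℕ) :
    MemLp (fun p => discrepancy S (c ∘ p.1) (c ∘ p.2)) 2 (twoSample μ m n) :=
  memLp_finsetSum _ fun q _ => (memLp_countDiff (hc q) m n).abs

theorem integral_discrepancy_le (hc : ∀ q, MeasurableSet (c ⁻¹' {q})) (S : Finset ι) (m n : ℕ) :
    ∫ p, discrepancy S (c ∘ p.1) (c ∘ p.2) ∂twoSample μ m n ≤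
      √(#S * sampleFluctuation m n) := by
  refine (integral_le_sqrt_integral_sq (memLp_discrepancy hc S m n)).trans ?_
  gcongr
  have hint (q : ι) := (memLp_countDiff (μ := μ) (hc q) m n).integrable_sq
  calc
    _ ≤ ∫ p, #S * ∑ q ∈ S, countDiff (c ∘ p.1) (c ∘ p.2) q ^ 2 ∂twoSample μ m n := by
      refine integral_mono (memLp_discrepancy hc S m n).integrable_sq
        ((integrable_finsetSum _ fun q _ => hint q).const_mul _) fun p => ?_
      simpa only [sq_abs, discrepancy] using
        sq_sum_le_card_mul_sum_sq (s := S) (f := fun q => |countDiff (c ∘ p.1) (c ∘ p.2) q|)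
    _ = #S * ∑ q ∈ S, ∫ p, countDiff (c ∘ p.1) (c ∘ p.2) q ^ 2 ∂twoSample μ m n := by
      rw [integral_const_mul, integral_finsetSum _ fun q _ => hint q]
    _ ≤ #S * ∑ q ∈ S, sampleFluctuation m n * μ.real (c ⁻¹' {q}) := by
      gcongr with q
      exact integral_countDiff_sq_le (hc q) m n
    _ ≤ #S * sampleFluctuation m n := by
      rw [← Finset.mul_sum]
      gcongr
      exact mul_le_of_le_one_right (sampleFluctuation_nonneg m n)
        (sum_measureReal_fiber_le_one hc S)

end TwoSample

section PoissonMoments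

variable (r : ℝ≥0)

lemma hasSum_descFactorial_poissonMeasure (k : ℕ) :
    HasSum (fun n : ℕ => Real.exp (-r) * r ^ n / n ! * n.descFactorial k) ((r : ℝ) ^ k) := by
  rw [← hasSum_nat_add_iff' k]
  have hlow : ∑ n ∈ Finset.range k, Real.exp (-r) * r ^ n / n ! * n.descFactorial k = 0 :=
    Finset.sum_eq_zero fun n hn => by
      simp [Nat.descFactorial_of_lt (Finset.mem_range.mp hn)]
  have hshift (n : ℕ) : Real.exp (-r) * r ^ (n + k) / (n + k)! * (n + k).descFactorial k =
      r ^ k * (Real.exp (-r) * r ^ n / n !) := by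
    have hfact := Nat.factorial_mul_descFactorial (Nat.le_add_left k n)
    rw [Nat.add_sub_cancel] at hfact
    rw [← hfact]
    push_cast
    have := Nat.descFactorial_pos.mpr (Nat.le_add_left k n)
    field_simp
    ring
  simpa only [hlow, hshift, sub_zero, mul_one] using
    (hasSum_one_poissonMeasure r).mul_left ((r : ℝ) ^ k)

lemma integrable_descFactorial_poissonMeasure (k : ℕ) :
    Integrable (fun n : ℕ => (n.descFactorial k : ℝ)) (poissonMeasure r) := by
  rw [integrable_poissonMeasure_iff]
  simpa using (hasSum_descFactorial_poissonMeasure r k).summable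

lemma integral_descFactorial_poissonMeasure (k : ℕ) :
    ∫ n : ℕ, (n.descFactorial k : ℝ) ∂poissonMeasure r = r ^ k := by
  rw [integral_poissonMeasure]
  exact (hasSum_descFactorial_poissonMeasure r k).tsum_eq

lemma natCast_sq_eq_descFactorial_add (n : ℕ) :
    (n : ℝ) ^ 2 = n.descFactorial 2 + n.descFactorial 1 := by
  rw [Nat.cast_descFactorial_two, Nat.descFactorial_one]
  ring

lemma memLp_natCast_poissonMeasure : MemLp (fun n : ℕ => (n : ℝ)) 2 (poissonMeasure r) := by
  rw [memLp_two_iff_integrable_sq .of_discrete]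
  simp only [natCast_sq_eq_descFactorial_add]
  exact (integrable_descFactorial_poissonMeasure r 2).add
    (integrable_descFactorial_poissonMeasure r 1)

lemma integral_natCast_poissonMeasure : ∫ n : ℕ, (n : ℝ) ∂poissonMeasure r = r := by
  simpa using integral_descFactorial_poissonMeasure r 1

lemma variance_natCast_poissonMeasure : Var[fun n : ℕ => (n : ℝ); poissonMeasure r] = r := by
  rw [variance_eq_sub (memLp_natCast_poissonMeasure r), integral_natCast_poissonMeasure]
  simp only [Pi.pow_apply, natCast_sq_eq_descFactorial_add]
  rw [integral_add (integrable_descFactorial_poissonMeasure r 2)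
    (integrable_descFactorial_poissonMeasure r 1), integral_descFactorial_poissonMeasure,
    integral_descFactorial_poissonMeasure]
  ring

variable (s : ℝ≥0)

lemma integrable_fst_poissonMeasure_prod :
    Integrable (fun k : ℕ × ℕ => (k.1 : ℝ)) ((poissonMeasure r).prod (poissonMeasure s)) :=
  ((memLp_natCast_poissonMeasure r).integrable one_le_two).comp_fst _

lemma integrable_snd_poissonMeasure_prod :
    Integrable (fun k : ℕ × ℕ => (k.2 : ℝ)) ((poissonMeasure r).prod (poissonMeasure s)) :=
  ((memLp_natCast_poissonMeasure s).integrable one_le_two).comp_snd _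

lemma integrable_sq_sub_poissonMeasure_prod :
    Integrable (fun k : ℕ × ℕ => ((k.1 : ℝ) - k.2) ^ 2)
      ((poissonMeasure r).prod (poissonMeasure s)) :=
  (((memLp_natCast_poissonMeasure r).comp_fst _).sub
    ((memLp_natCast_poissonMeasure s).comp_snd _)).integrable_sq

lemma integrable_sampleFluctuation_poissonMeasure :
    Integrable (fun k : ℕ × ℕ => sampleFluctuation k.1 k.2)
      ((poissonMeasure r).prod (poissonMeasure s)) :=
  ((integrable_fst_poissonMeasure_prod r s).add (integrable_snd_poissonMeasure_prod r s)).add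
    (integrable_sq_sub_poissonMeasure_prod r s)

lemma integral_sampleFluctuation_poissonMeasure :
    ∫ k : ℕ × ℕ, sampleFluctuation k.1 k.2 ∂(poissonMeasure r).prod (poissonMeasure s) =
      2 * (r + s) + (r - s) ^ 2 := by
  have hfst := integrable_fst_poissonMeasure_prod r s
  have hsnd := integrable_snd_poissonMeasure_prod r s
  simp only [sampleFluctuation]
  rw [integral_add (f := fun k : ℕ × ℕ => (k.1 + k.2 : ℝ)) (hfst.add hsnd)
    (integrable_sq_sub_poissonMeasure_prod r s), integral_add hfst hsnd,
    integral_sq_sub_prod (memLp_natCast_poissonMeasure r) (memLp_natCast_poissonMeasure s),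
    integral_fun_fst fun n : ℕ => (n : ℝ), integral_fun_snd fun n : ℕ => (n : ℝ)]
  simp only [variance_natCast_poissonMeasure, integral_natCast_poissonMeasure, probReal_univ,
    one_smul]
  ring

end PoissonMoments

section MeanMatching

variable {d : ℕ}

/-- The expected length of a minimum bipartite matching between independent samples of sizes `m`
and `n` from `μ`. -/
def meanLMBM (μ : Measure (EuclideanSpace ℝ (Fin d))) (m n : ℕ) : ℝ :=
  ∫ p, LMBM p.1 p.2 ∂twoSample μ m n

lemma meanLMBM_nonneg (μ : Measure (EuclideanSpace ℝ (Fin d))) (m n : ℕ) : 0 ≤ meanLMBM μ m n :=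
  integral_nonneg fun p => LMBM_nonneg p.1 p.2

lemma measurableSet_dyadicCell_fiber (k : ℕ) (q : Fin d → ℕ) :
    MeasurableSet (dyadicCell k ⁻¹' {q} : Set (EuclideanSpace ℝ (Fin d))) :=
  measurable_dyadicCell k (measurableSet_singleton q)

variable {μ : Measure (EuclideanSpace ℝ (Fin d))} [IsProbabilityMeasure μ]

lemma integrable_dyadicDiscrepancy (k m n : ℕ) :
    Integrable (fun p => dyadicDiscrepancy k p.1 p.2) (twoSample μ m n) :=
  (memLp_discrepancy (measurableSet_dyadicCell_fiber k) _ m n).integrable one_le_two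

lemma integral_dyadicDiscrepancy_le (k m n : ℕ) :
    ∫ p, dyadicDiscrepancy k p.1 p.2 ∂twoSample μ m n ≤
      √((2 ^ k) ^ d * sampleFluctuation m n) := by
  simpa [card_dyadicCells, dyadicDiscrepancy] using
    integral_discrepancy_le (μ := μ) (measurableSet_dyadicCell_fiber k) (dyadicCells d k) m n

theorem meanLMBM_le_sum_sqrt (hμ : ∀ᵐ x ∂μ, x ∈ unitCube d) (K m n : ℕ) :
    meanLMBM μ m n ≤ √d * (2 * (1 / 2) ^ K) * m + ∑ l ∈ Finset.range K,
      √d * (2 * (1 / 2) ^ l) * √((2 ^ (l + 1)) ^ d * sampleFluctuation m n) := by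
  have hint (l : ℕ) := (integrable_dyadicDiscrepancy (μ := μ) (l + 1) m n).const_mul
    (√d * (2 * (1 / 2) ^ l))
  have hsum := integrable_finsetSum (Finset.range K) fun l _ => hint l
  have hconst := integrable_const (√d * (2 * (1 / 2) ^ K) * m) (μ := twoSample μ m n)
  calc
    meanLMBM μ m n ≤ ∫ p, (√d * (2 * (1 / 2) ^ K) * m + ∑ l ∈ Finset.range K,
        √d * (2 * (1 / 2) ^ l) * dyadicDiscrepancy (l + 1) p.1 p.2) ∂twoSample μ m n := by
      refine integral_mono_of_nonneg (ae_of_all _ fun p => LMBM_nonneg p.1 p.2)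
        (hconst.add hsum) ?_
      filter_upwards [ae_twoSample_mem hμ m n] with p hp
      exact LMBM_le_sum_dyadicDiscrepancy hp.1 hp.2 K
    _ = √d * (2 * (1 / 2) ^ K) * m + ∑ l ∈ Finset.range K,
        √d * (2 * (1 / 2) ^ l) * ∫ p, dyadicDiscrepancy (l + 1) p.1 p.2 ∂twoSample μ m n := by
      rw [integral_add hconst hsum, integral_finsetSum _ fun l _ => hint l]
      simp only [integral_const_mul, integral_const, probReal_univ, one_smul]
    _ ≤ _ := by
      gcongr with l
      exact integral_dyadicDiscrepancy_le (l + 1) m n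

lemma meanLMBM_le_mul (hμ : ∀ᵐ x ∂μ, x ∈ unitCube d) (m n : ℕ) :
    meanLMBM μ m n ≤ √d * 2 * m := by
  simpa using meanLMBM_le_sum_sqrt hμ 0 m n

end MeanMatching

section PlanarMatching

variable {μ : Measure (EuclideanSpace ℝ (Fin 2))} [IsProbabilityMeasure μ]

lemma meanLMBM_le_of_dim_two (hμ : ∀ᵐ x ∂μ, x ∈ unitCube 2) (K m n : ℕ) :
    meanLMBM μ m n ≤ 2 * √2 * ((1 / 2) ^ K * m + 2 * K * √(sampleFluctuation m n)) := by
  have hscale (l : ℕ) : √(2 : ℕ) * (2 * (1 / 2) ^ l) *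
      √((2 ^ (l + 1)) ^ 2 * sampleFluctuation m n) = 4 * √2 * √(sampleFluctuation m n) := by
    rw [Real.sqrt_mul (by positivity), Real.sqrt_sq (by positivity), pow_succ, one_div, inv_pow]
    push_cast
    field_simp
    ring
  refine (meanLMBM_le_sum_sqrt hμ K m n).trans_eq ?_
  simp only [hscale, Finset.sum_const, Finset.card_range, nsmul_eq_mul]
  push_cast
  ring

lemma two_thirds_le_log {x : ℝ} (hx : 2 ≤ x) : 2 / 3 ≤ Real.log x := by
  have := Real.log_le_log two_pos hx
  linarith [Real.log_two_gt_d9]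

lemma exists_sqrt_le_two_pow {x : ℝ} (hx : 2 ≤ x) :
    ∃ K : ℕ, √x ≤ 2 ^ K ∧ K ≤ 3 * Real.log x := by
  have hlog := two_thirds_le_log hx
  refine ⟨⌈Real.log x⌉₊, ?_, ?_⟩
  · rw [← Real.log_le_log_iff (by positivity) (by positivity), Real.log_sqrt (by positivity),
      Real.log_pow]
    have hceil := Nat.le_ceil (Real.log x)
    nlinarith [Real.log_two_gt_d9]
  · linarith [Nat.ceil_lt_add_one (show 0 ≤ Real.log x by linarith)]

theorem meanLMBM_le_mul_log (hμ : ∀ᵐ x ∂μ, x ∈ unitCube 2) {x : ℝ} (hx : 2 ≤ x) (m n : ℕ) :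
    meanLMBM μ m n ≤ 15 * Real.log x * (√x + sampleFluctuation m n / √x) := by
  obtain ⟨K, hK, hKlog⟩ := exists_sqrt_le_two_pow hx
  set D := sampleFluctuation m n
  have hD : 0 ≤ D := sampleFluctuation_nonneg m n
  have hx0 : 0 < √x := by positivity
  have hlog := two_thirds_le_log hx
  have hfine : (1 / 2) ^ K * (m : ℝ) ≤ 3 / 2 * Real.log x * (√x + D / √x) := calc
    (1 / 2) ^ K * (m : ℝ) = m / 2 ^ K := by rw [one_div, inv_pow, inv_mul_eq_div]
    _ ≤ D / √x := by
      gcongr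
      exact le_sampleFluctuation m n
    _ ≤ √x + D / √x := le_add_of_nonneg_left hx0.le
    _ ≤ 3 / 2 * Real.log x * (√x + D / √x) :=
      le_mul_of_one_le_left (by positivity) (by linarith)
  have hamgm : 2 * √D ≤ √x + D / √x := by
    have := two_mul_le_add_sq (√√x) (√(D / √x))
    rwa [mul_assoc, ← Real.sqrt_mul hx0.le, mul_div_cancel₀ D hx0.ne', Real.sq_sqrt hx0.le,
      Real.sq_sqrt (by positivity)] at this
  have hscales : 2 * K * √D ≤ 3 * Real.log x * (√x + D / √x) := by
    rw [mul_comm 2, mul_assoc]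
    gcongr
  have hsqrt : 2 * √2 ≤ (3 : ℝ) := by
    nlinarith [Real.sq_sqrt (zero_le_two : (0 : ℝ) ≤ 2), Real.sqrt_nonneg 2]
  calc
    meanLMBM μ m n ≤ 2 * √2 * ((1 / 2) ^ K * m + 2 * K * √D) := meanLMBM_le_of_dim_two hμ K m n
    _ ≤ 3 * (3 / 2 * Real.log x * (√x + D / √x) + 3 * Real.log x * (√x + D / √x)) := by gcongr
    _ ≤ 15 * Real.log x * (√x + D / √x) := by
      have : 0 ≤ Real.log x * (√x + D / √x) := by positivity
      linarith

lemma meanLMBM_self_le_sqrt_mul_log (hμ : ∀ᵐ x ∂μ, x ∈ unitCube 2) {N : ℕ} (hN : 2 ≤ N) :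
    meanLMBM μ N N ≤ 45 * √N * Real.log N := by
  refine (meanLMBM_le_mul_log hμ (Nat.ofNat_le_cast.mpr hN) N N).trans_eq ?_
  rw [sampleFluctuation, sub_self, zero_pow two_ne_zero, add_zero, ← two_mul, mul_div_assoc,
    Real.div_sqrt]
  ring

end PlanarMatching

section Poissonization

variable {d : ℕ}

/-- The expected length of a minimum bipartite matching between samples from `μ` whose sizes are
independent Poisson variables of mean `r`. -/
def poissonMeanLMBM (μ : Measure (EuclideanSpace ℝ (Fin d))) (r : ℝ≥0) : ℝ :=
  ∫ k : ℕ × ℕ, meanLMBM μ k.1 k.2 ∂(poissonMeasure r).prod (poissonMeasure r)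

lemma integrable_meanLMBM_poissonMeasure {μ : Measure (EuclideanSpace ℝ (Fin d))}
    [IsProbabilityMeasure μ] (hμ : ∀ᵐ x ∂μ, x ∈ unitCube d) (r : ℝ≥0) :
    Integrable (fun k : ℕ × ℕ => meanLMBM μ k.1 k.2)
      ((poissonMeasure r).prod (poissonMeasure r)) := by
  refine ((integrable_fst_poissonMeasure_prod r r).const_mul (√d * 2)).mono' .of_discrete
    (ae_of_all _ fun k => ?_)
  rw [Real.norm_of_nonneg (meanLMBM_nonneg μ _ _)]
  exact meanLMBM_le_mul hμ _ _

lemma poissonMeanLMBM_le_sqrt_mul_log {μ : Measure (EuclideanSpace ℝ (Fin 2))}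
    [IsProbabilityMeasure μ] (hμ : ∀ᵐ x ∂μ, x ∈ unitCube 2) {r : ℝ≥0} (hr : 2 ≤ (r : ℝ)) :
    poissonMeanLMBM μ r ≤ 75 * √r * Real.log r := by
  have hfluct := (integrable_sampleFluctuation_poissonMeasure r r).div_const √r
  calc
    poissonMeanLMBM μ r ≤ ∫ k : ℕ × ℕ, 15 * Real.log r * (√r + sampleFluctuation k.1 k.2 / √r)
        ∂(poissonMeasure r).prod (poissonMeasure r) :=
      integral_mono (integrable_meanLMBM_poissonMeasure hμ r)
        (((integrable_const _).add hfluct).const_mul _) fun k => meanLMBM_le_mul_log hμ hr _ _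
    _ = 15 * Real.log r * (√r + 4 * r / √r) := by
      rw [integral_const_mul, integral_add (integrable_const _) hfluct, integral_div,
        integral_sampleFluctuation_poissonMeasure, integral_const, probReal_univ, one_smul]
      ring
    _ = 75 * √r * Real.log r := by
      rw [mul_div_assoc, Real.div_sqrt]
      ring

lemma unitCube_eq_preimage_pi (d : ℕ) :
    unitCube d = WithLp.ofLp ⁻¹' Set.univ.pi fun _ => Set.Icc (0 : ℝ) 1 := by
  ext x
  simp only [Set.mem_preimage, Set.mem_univ_pi]
  rfl

lemma measurableSet_pi_Icc (d : ℕ) :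
    MeasurableSet (Set.univ.pi fun _ : Fin d => Set.Icc (0 : ℝ) 1) :=
  MeasurableSet.univ_pi fun _ => measurableSet_Icc

lemma measurableSet_unitCube (d : ℕ) : MeasurableSet (unitCube d) := by
  rw [unitCube_eq_preimage_pi]
  exact (measurableSet_pi_Icc d).preimage (by fun_prop)

instance isProbabilityMeasure_unifCube (d : ℕ) : IsProbabilityMeasure (unifCube d) := by
  constructor
  rw [unifCube, Measure.restrict_apply_univ, unitCube_eq_preimage_pi,
    (PiLp.volume_preserving_ofLp (Fin d)).measure_preimage
      (measurableSet_pi_Icc d).nullMeasurableSet, volume_pi_pi]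
  simp

lemma ae_unifCube_mem (d : ℕ) : ∀ᵐ x ∂unifCube d, x ∈ unitCube d :=
  ae_restrict_mem (measurableSet_unitCube d)

lemma MP_eq_poissonMeanLMBM (d : ℕ) (r : ℝ≥0) : MP d r = poissonMeanLMBM (unifCube d) r := by
  rw [poissonMeanLMBM,
    integral_prod _ (integrable_meanLMBM_poissonMeasure (ae_unifCube_mem d) r)]
  simp only [integral_poissonMeasure, smul_eq_mul, ← tsum_mul_left]
  rfl

end Poissonization

theorem MP_dim_two_sqrt_log_bound_general :
    ∃ C : ℝ, 0 < C ∧ ∀ (μ : Measure (EuclideanSpace ℝ (Fin 2))) [IsProbabilityMeasure μ],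
      (∀ᵐ x ∂μ, x ∈ unitCube 2) →
        (∀ r : ℝ≥0, 2 ≤ (r : ℝ) → poissonMeanLMBM μ r ≤ C * √r * Real.log r) ∧
        ∀ N : ℕ, 2 ≤ N → meanLMBM μ N N ≤ C * √N * Real.log N := by
  refine ⟨75, by norm_num, fun μ _ hμ => ⟨fun r hr => poissonMeanLMBM_le_sqrt_mul_log hμ hr,
    fun N hN => (meanLMBM_self_le_sqrt_mul_log hμ hN).trans ?_⟩⟩
  gcongr
  norm_num

end

/-- In dimension `2`: the Poissonized mean minimum bipartite matching length satisfies
`M(N) ≤ C √N log N`, and consequently the expected minimum bipartite matching length of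
`2N` independent uniform points of `[0,1]²` is at most `C' √N log N`. -/
theorem MP_dim_two_sqrt_log_bound :
    (∃ C : ℝ, 0 < C ∧ ∀ N : ℝ, 2 ≤ N → MP 2 N ≤ C * Real.sqrt N * Real.log N) ∧
    ∃ C' : ℝ, 0 < C' ∧ ∀ N : ℕ, 2 ≤ N →
      (∫ p : (Fin N → EuclideanSpace ℝ (Fin 2)) × (Fin N → EuclideanSpace ℝ (Fin 2)),
          LMBM p.1 p.2
          ∂ ((Measure.pi fun _ => unifCube 2).prod (Measure.pi fun _ => unifCube 2))) ≤
        C' * Real.sqrt N * Real.log N := by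
  obtain ⟨C, hC, hbound⟩ := MP_dim_two_sqrt_log_bound_general
  have hcube := hbound (unifCube 2) (ae_unifCube_mem 2)
  exact ⟨⟨C, hC, fun N hN => (MP_eq_poissonMeanLMBM 2 ⟨N, by linarith⟩).trans_le (hcube.1 _ hN)⟩,
    C, hC, hcube.2⟩
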